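/- Let t ≥ 2 and let G be a graph on n vertices with m edges and spectral radius λ. Then the number of (unlabelled) copies of K_{t,t} in G satisfies #K_{t,t}(G) ≥ B_t (λ²/m)^{t(t-1)} m^t − (C(2t,2)/(2(t!)²)) n^{2t−1}, where B_t = 2^{−(t−1)²}/(t!)². -/

import Mathlib

open scoped Classical BigOperators

/-- Adjacency matrix of a simple graph on `Fin n`, with real entries. -/
noncomputable def adjMat {n : ℕ} (G : SimpleGraph (Fin n)) : Matrix (Fin n) (Fin n) ℝ :=
  fun i j => if G.Adj i j then 1 else 0

/-- Spectral radius (largest real eigenvalue) of a real matrix. -/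
noncomputable def specRad {α : Type*} [Fintype α] (A : Matrix α α ℝ) : ℝ :=
  sSup {μ : ℝ | ∃ x : α → ℝ, x ≠ 0 ∧ A.mulVec x = μ • x}

/-- The ℓ^p norm of a finitely supported real vector, for a real exponent `p`. -/
noncomputable def pNorm {α : Type*} [Fintype α] (p : ℝ) (x : α → ℝ) : ℝ :=
  (∑ i, |x i| ^ p) ^ (1 / p)

/-- The ℓ^p → ℓ^r operator norm of a real matrix. -/
noncomputable def opNorm {α β : Type*} [Fintype α] [Fintype β] (p r : ℝ)
    (A : Matrix β α ℝ) : ℝ :=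
  sSup {c : ℝ | ∃ x : α → ℝ, x ≠ 0 ∧ c = pNorm r (A.mulVec x) / pNorm p x}

/-- Hölder's inequality with exponents `k + 1` and `(k + 1) / k`, free of fractional powers. -/
theorem sum_mul_pow_pow_succ_le {ι : Type*} (s : Finset ι) (a b : ι → ℝ)
    (ha : ∀ i, 0 ≤ a i) (hb : ∀ i, 0 ≤ b i) {k : ℕ} (hk : 0 < k) :
    (∑ i ∈ s, a i * b i ^ k) ^ (k + 1)
      ≤ (∑ i ∈ s, a i ^ (k + 1)) * (∑ i ∈ s, b i ^ (k + 1)) ^ k := by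
  have hk' : (0 : ℝ) < k := by exact_mod_cast hk
  have hpq : ((k : ℝ) + 1).HolderConjugate (((k : ℝ) + 1) / k) := by
    rw [Real.holderConjugate_iff]
    refine ⟨by linarith, ?_⟩
    field_simp
    ring
  have hA : 0 ≤ ∑ i ∈ s, a i ^ (k + 1) := Finset.sum_nonneg fun i _ => pow_nonneg (ha i) _
  have hB : 0 ≤ ∑ i ∈ s, b i ^ (k + 1) := Finset.sum_nonneg fun i _ => pow_nonneg (hb i) _
  have h := Real.inner_le_Lp_mul_Lq_of_nonneg s hpq (f := a) (g := fun i => b i ^ k)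
    (fun i _ => ha i) (fun i _ => pow_nonneg (hb i) k)
  have ea : ∀ i, a i ^ ((k : ℝ) + 1) = a i ^ (k + 1) := fun i => by
    rw [← Real.rpow_natCast]; push_cast; rfl
  have eb : ∀ i, (b i ^ k) ^ (((k : ℝ) + 1) / k) = b i ^ (k + 1) := fun i => by
    rw [← Real.rpow_natCast, ← Real.rpow_mul (hb i), ← Real.rpow_natCast]
    congr 1
    push_cast
    field_simp
  simp only [ea, eb] at h
  refine (pow_le_pow_left₀ (Finset.sum_nonneg fun i _ =>
    mul_nonneg (ha i) (pow_nonneg (hb i) k)) h (k + 1)).trans (le_of_eq ?_)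
  rw [mul_pow, ← Real.rpow_natCast, ← Real.rpow_natCast (_ ^ (1 / (((k : ℝ) + 1) / k))),
    ← Real.rpow_mul hA, ← Real.rpow_mul hB]
  have h1 : 1 / ((k : ℝ) + 1) * ((k + 1 : ℕ) : ℝ) = 1 := by
    push_cast
    field_simp
  have h2 : 1 / (((k : ℝ) + 1) / k) * ((k + 1 : ℕ) : ℝ) = k := by
    push_cast
    field_simp
  rw [h1, h2, Real.rpow_one, Real.rpow_natCast]

/-- The power mean inequality comparing the moments of order `t` and `2 (t - 1)`. -/
theorem sum_pow_pow_le_card_pow_mul {ι : Type*} (s : Finset ι) (c : ι → ℝ) (hc : ∀ i, 0 ≤ c i)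
    {t : ℕ} (ht : 2 ≤ t) :
    (∑ i ∈ s, c i ^ t) ^ (2 * (t - 1))
      ≤ (s.card : ℝ) ^ (t - 2) * (∑ i ∈ s, c i ^ (2 * (t - 1))) ^ t := by
  obtain ⟨r, rfl⟩ := Nat.exists_eq_add_of_le' ht
  have e1 : r + 2 - 1 = r + 1 := rfl
  have e2 : r + 2 - 2 = r := rfl
  rw [e1, e2]
  have hr : (0 : ℝ) ≤ r := r.cast_nonneg
  set q : ℝ := (2 * (r + 1)) / (r + 2) with hq
  have hq1 : 1 ≤ q := by
    rw [hq, le_div_iff₀ (by positivity)]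
    linarith
  have hC : ∀ i, 0 ≤ c i ^ (r + 2) := fun i => pow_nonneg (hc i) _
  have hE : 0 ≤ ∑ i ∈ s, c i ^ (r + 2) := Finset.sum_nonneg fun i _ => hC i
  have h := Real.rpow_sum_le_const_mul_sum_rpow_of_nonneg s (f := fun i => c i ^ (r + 2)) hq1
    (fun i _ => hC i)
  have ec : ∀ i, (c i ^ (r + 2)) ^ q = c i ^ (2 * (r + 1)) := fun i => by
    rw [← Real.rpow_natCast, ← Real.rpow_mul (hc i), ← Real.rpow_natCast]
    congr 1
    rw [hq]
    push_cast
    field_simp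
  simp only [ec] at h
  have h' := pow_le_pow_left₀ (Real.rpow_nonneg hE q) h (r + 2)
  rw [mul_pow, ← Real.rpow_natCast, ← Real.rpow_mul hE,
    ← Real.rpow_natCast (_ ^ (q - 1)), ← Real.rpow_mul (Nat.cast_nonneg _)] at h'
  have e3 : q * ((r + 2 : ℕ) : ℝ) = ((2 * (r + 1) : ℕ) : ℝ) := by
    rw [hq]
    push_cast
    field_simp
  have e4 : (q - 1) * ((r + 2 : ℕ) : ℝ) = (r : ℝ) := by
    rw [sub_mul, e3]
    push_cast
    ring
  rwa [e3, e4, Real.rpow_natCast, Real.rpow_natCast] at h'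

section Counting

variable {n : ℕ} (G : SimpleGraph (Fin n))

theorem adjMat_nonneg (i j : Fin n) : 0 ≤ adjMat G i j := by
  unfold adjMat
  split_ifs <;> norm_num

/-- The number of common neighbours of the vertices of a tuple, counted by the adjacency matrix. -/
noncomputable def codegree (t : ℕ) (v : Fin t → Fin n) : ℝ :=
  ∑ w, ∏ k, adjMat G w (v k)

theorem codegree_nonneg (t : ℕ) (v : Fin t → Fin n) : 0 ≤ codegree G t v :=
  Finset.sum_nonneg fun w _ => Finset.prod_nonneg fun k _ => adjMat_nonneg G w (v k)

theorem sum_codegree_pow_eq_card_hom (t : ℕ) :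
    ∑ v, codegree G t v ^ t = Nat.card (completeBipartiteGraph (Fin t) (Fin t) →g G) := by
  have e : (completeBipartiteGraph (Fin t) (Fin t) →g G) ≃
      {p : (Fin t → Fin n) × (Fin t → Fin n) // ∀ j k, G.Adj (p.2 j) (p.1 k)} :=
    { toFun := fun f => ⟨(f ∘ Sum.inl, f ∘ Sum.inr), fun j k => f.map_adj (by simp)⟩
      invFun := fun p => ⟨Sum.elim p.1.1 p.1.2, by
        rintro (a | a) (b | b) h
        · simp at h
        · exact (p.2 b a).symm
        · exact p.2 a b
        · simp at h⟩
      left_inv := fun f => by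
        ext x
        rcases x with x | x <;> rfl
      right_inv := fun p => rfl }
  rw [Nat.card_congr e, Nat.card_eq_fintype_card, Fintype.card_subtype, Finset.card_filter,
    Nat.cast_sum, Fintype.sum_prod_type]
  refine Finset.sum_congr rfl fun v _ => ?_
  rw [codegree, Fintype.sum_pow]
  refine Finset.sum_congr rfl fun w _ => ?_
  simp only [adjMat, Finset.prod_ite_zero, Finset.prod_const_one]
  simp

/-- The adjacency matrix has `ℓ^(t/(t-1)) → ℓ^t` norm at most `hom(K_{t,t}, G)^(1/t²)`. -/
theorem sum_adjMat_mul_pow_le {t : ℕ} (ht : 2 ≤ t) (b : Fin n → ℝ) (hb : ∀ i, 0 ≤ b i) :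
    (∑ i, ∑ j, adjMat G i j * (b i ^ (t - 1) * b j ^ (t - 1))) ^ (t ^ 2)
      ≤ Nat.card (completeBipartiteGraph (Fin t) (Fin t) →g G)
        * (∑ i, b i ^ t) ^ (2 * t * (t - 1)) := by
  rw [← sum_codegree_pow_eq_card_hom]
  obtain ⟨k, rfl⟩ : ∃ k, t = k + 1 := ⟨t - 1, by omega⟩
  have hk : 0 < k := by omega
  simp only [Nat.add_sub_cancel]
  set S := ∑ i, b i ^ (k + 1) with hS
  set T := ∑ v, codegree G (k + 1) v ^ (k + 1)
  have hS0 : 0 ≤ S := Finset.sum_nonneg fun i _ => pow_nonneg (hb i) _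
  set a : Fin n → ℝ := fun i => ∑ j, adjMat G i j * b j ^ k with ha
  have ha0 : ∀ i, 0 ≤ a i := fun i =>
    Finset.sum_nonneg fun j _ => mul_nonneg (adjMat_nonneg G i j) (pow_nonneg (hb j) k)
  have hF : ∑ i, ∑ j, adjMat G i j * (b i ^ k * b j ^ k) = ∑ i, a i * b i ^ k := by
    refine Finset.sum_congr rfl fun i _ => ?_
    rw [ha, Finset.sum_mul]
    exact Finset.sum_congr rfl fun j _ => by ring
  have hsum : ∑ i, a i ^ (k + 1)
      = ∑ v : Fin (k + 1) → Fin n, codegree G (k + 1) v * (∏ l, b (v l)) ^ k := by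
    simp only [ha, Fintype.sum_pow, codegree, Finset.sum_mul]
    rw [Finset.sum_comm]
    refine Finset.sum_congr rfl fun v _ => Finset.sum_congr rfl fun i _ => ?_
    rw [Finset.prod_mul_distrib, Finset.prod_pow]
  have h1 := sum_mul_pow_pow_succ_le Finset.univ a b ha0 hb hk
  have h2 := sum_mul_pow_pow_succ_le Finset.univ (codegree G (k + 1)) (fun v => ∏ l, b (v l))
    (codegree_nonneg G (k + 1)) (fun v => Finset.prod_nonneg fun l _ => hb _) hk
  have hprod : ∑ v : Fin (k + 1) → Fin n, (∏ l, b (v l)) ^ (k + 1) = S ^ (k + 1) := by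
    rw [hS, Fintype.sum_pow]
    exact Finset.sum_congr rfl fun v _ => (Finset.prod_pow _ _ _).symm
  rw [← hsum, hprod] at h2
  rw [hF]
  have hF0 : 0 ≤ ∑ i, a i * b i ^ k :=
    Finset.sum_nonneg fun i _ => mul_nonneg (ha0 i) (pow_nonneg (hb i) k)
  calc (∑ i, a i * b i ^ k) ^ ((k + 1) ^ 2)
      = ((∑ i, a i * b i ^ k) ^ (k + 1)) ^ (k + 1) := by rw [← pow_mul, sq]
    _ ≤ ((∑ i, a i ^ (k + 1)) * S ^ k) ^ (k + 1) := pow_le_pow_left₀ (pow_nonneg hF0 _) h1 _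
    _ = (∑ i, a i ^ (k + 1)) ^ (k + 1) * (S ^ k) ^ (k + 1) := mul_pow _ _ _
    _ ≤ (T * (S ^ (k + 1)) ^ k) * (S ^ k) ^ (k + 1) := by gcongr
    _ = T * S ^ (2 * (k + 1) * k) := by ring

/-- The ordered pairs of adjacent vertices. -/
noncomputable def adjPairs : Finset (Fin n × Fin n) :=
  Finset.univ.filter fun p => G.Adj p.1 p.2

theorem card_adjPairs : (adjPairs G).card = 2 * Nat.card G.edgeSet := by
  rw [Nat.card_eq_fintype_card, ← SimpleGraph.edgeFinset_card,
    ← SimpleGraph.sum_degrees_eq_twice_card_edges, adjPairs, Finset.card_filter,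
    Fintype.sum_prod_type]
  refine Finset.sum_congr rfl fun i _ => ?_
  rw [← Finset.card_filter, ← SimpleGraph.card_neighborFinset_eq_degree,
    SimpleGraph.neighborFinset_eq_filter]

theorem sum_adjPairs (f : Fin n → Fin n → ℝ) :
    ∑ p ∈ adjPairs G, f p.1 p.2 = ∑ i, ∑ j, adjMat G i j * f i j := by
  rw [adjPairs, Finset.sum_filter, Fintype.sum_prod_type]
  simp [adjMat]

theorem abs_eigenvalue_pow_le {t : ℕ} (ht : 2 ≤ t) {μ : ℝ} {x : Fin n → ℝ} (hx : x ≠ 0)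
    (hμ : (adjMat G).mulVec x = μ • x) :
    |μ| ^ (2 * t * (t - 1))
      ≤ (2 * Nat.card G.edgeSet : ℝ) ^ (t * (t - 2))
        * Nat.card (completeBipartiteGraph (Fin t) (Fin t) →g G) := by
  have ht0 : t ≠ 0 := by omega
  set w : Fin n → ℝ := fun i => |x i| ^ ((t : ℝ)⁻¹)
  have hw0 : ∀ i, 0 ≤ w i := fun i => Real.rpow_nonneg (abs_nonneg _) _
  have hwt : ∀ i, w i ^ t = |x i| := fun i => Real.rpow_inv_natCast_pow (abs_nonneg _) ht0
  set S := ∑ i, (w i ^ 2) ^ t with hS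
  have hSx : ∀ i, (w i ^ 2) ^ t = |x i| * |x i| := fun i => by
    rw [← pow_mul, mul_comm, pow_mul, hwt, sq]
  have hSpos : 0 < S := by
    obtain ⟨i, hi⟩ := Function.ne_iff.mp hx
    refine Finset.sum_pos' (fun i _ => by rw [hSx]; positivity) ⟨i, Finset.mem_univ i, ?_⟩
    rw [hSx]
    have := abs_pos.mpr hi
    positivity
  have hE : |μ| * S ≤ ∑ p ∈ adjPairs G, (w p.1 * w p.2) ^ t := by
    rw [sum_adjPairs G fun i j => (w i * w j) ^ t, hS, Finset.mul_sum]
    refine Finset.sum_le_sum fun i _ => ?_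
    have h := congrFun hμ i
    simp only [Matrix.mulVec, dotProduct, Pi.smul_apply, smul_eq_mul] at h
    have hle : |μ| * |x i| ≤ ∑ j, adjMat G i j * |x j| := by
      rw [← abs_mul, ← h]
      refine (Finset.abs_sum_le_sum_abs _ _).trans (le_of_eq ?_)
      exact Finset.sum_congr rfl fun j _ => by rw [abs_mul, abs_of_nonneg (adjMat_nonneg G i j)]
    calc |μ| * (w i ^ 2) ^ t = |μ| * |x i| * |x i| := by rw [hSx]; ring
      _ ≤ (∑ j, adjMat G i j * |x j|) * |x i| := by gcongr
      _ = ∑ j, adjMat G i j * (w i * w j) ^ t := by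
        rw [Finset.sum_mul]
        refine Finset.sum_congr rfl fun j _ => ?_
        rw [mul_pow, hwt, hwt]
        ring
  have hP := sum_pow_pow_le_card_pow_mul (adjPairs G) (fun p => w p.1 * w p.2)
    (fun p => mul_nonneg (hw0 _) (hw0 _)) ht
  rw [card_adjPairs] at hP
  have hH := sum_adjMat_mul_pow_le G ht (fun i => w i ^ 2) fun i => sq_nonneg _
  rw [← sum_adjPairs G fun i j => (w i ^ 2) ^ (t - 1) * (w j ^ 2) ^ (t - 1)] at hH
  have hF : ∀ p : Fin n × Fin n, (w p.1 ^ 2) ^ (t - 1) * (w p.2 ^ 2) ^ (t - 1)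
      = (w p.1 * w p.2) ^ (2 * (t - 1)) := fun p => by
    rw [← mul_pow, ← mul_pow, ← pow_mul]
  simp only [hF] at hH
  set F := ∑ p ∈ adjPairs G, (w p.1 * w p.2) ^ (2 * (t - 1))
  set H : ℝ := (Nat.card (completeBipartiteGraph (Fin t) (Fin t) →g G) : ℝ)
  set M : ℝ := 2 * (Nat.card G.edgeSet : ℝ)
  have hM0 : 0 ≤ M := by positivity
  push_cast at hP
  have hS0 : 0 ≤ |μ| * S := by positivity
  refine le_of_mul_le_mul_right ?_ (pow_pos hSpos (2 * t * (t - 1)))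
  calc |μ| ^ (2 * t * (t - 1)) * S ^ (2 * t * (t - 1))
      = ((|μ| * S) ^ (2 * (t - 1))) ^ t := by rw [← mul_pow, ← pow_mul]; congr 1; ring
    _ ≤ (M ^ (t - 2) * F ^ t) ^ t := by
      refine pow_le_pow_left₀ (pow_nonneg hS0 _) ?_ _
      exact (pow_le_pow_left₀ hS0 hE _).trans hP
    _ = M ^ (t * (t - 2)) * F ^ t ^ 2 := by
      rw [mul_pow, ← pow_mul, ← pow_mul, sq, mul_comm t (t - 2)]
    _ ≤ M ^ (t * (t - 2)) * (H * S ^ (2 * t * (t - 1))) := by gcongr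
    _ = M ^ (t * (t - 2)) * H * S ^ (2 * t * (t - 1)) := by ring

/-- The spectral Sidorenko bound for `K_{t,t}`. -/
theorem specRad_pow_le {t : ℕ} (ht : 2 ≤ t) :
    specRad (adjMat G) ^ (2 * t * (t - 1))
      ≤ (2 * Nat.card G.edgeSet : ℝ) ^ (t * (t - 2))
        * Nat.card (completeBipartiteGraph (Fin t) (Fin t) →g G) := by
  set R : ℝ := (2 * Nat.card G.edgeSet : ℝ) ^ (t * (t - 2))
        * Nat.card (completeBipartiteGraph (Fin t) (Fin t) →g G)
  have hR0 : 0 ≤ R := by positivity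
  set N := 2 * t * (t - 1)
  have hN0 : N ≠ 0 := by
    have : 0 < t - 1 := by omega
    positivity
  set B : ℝ := R ^ ((N : ℝ)⁻¹)
  have hB0 : 0 ≤ B := Real.rpow_nonneg hR0 _
  have hBN : B ^ N = R := Real.rpow_inv_natCast_pow hR0 hN0
  have hbd : ∀ μ ∈ {μ : ℝ | ∃ x : Fin n → ℝ, x ≠ 0 ∧ (adjMat G).mulVec x = μ • x}, |μ| ≤ B := by
    rintro μ ⟨x, hx, hμ⟩
    refine le_of_pow_le_pow_left₀ hN0 hB0 ?_
    rw [hBN]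
    exact abs_eigenvalue_pow_le G ht hx hμ
  have habs : |specRad (adjMat G)| ≤ B := by
    rw [specRad]
    rcases Set.eq_empty_or_nonempty
      {μ : ℝ | ∃ x : Fin n → ℝ, x ≠ 0 ∧ (adjMat G).mulVec x = μ • x} with h | ⟨μ, hμ⟩
    · rw [h, Real.sSup_empty, abs_zero]
      exact hB0
    · refine abs_le.mpr ⟨?_, csSup_le ⟨μ, hμ⟩ fun ν hν => (abs_le.mp (hbd ν hν)).2⟩
      exact (abs_le.mp (hbd μ hμ)).1.trans
        (le_csSup ⟨B, fun ν hν => (abs_le.mp (hbd ν hν)).2⟩ hμ)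
  calc specRad (adjMat G) ^ N ≤ |specRad (adjMat G)| ^ N := by
        rw [← abs_pow]
        exact le_abs_self _
    _ ≤ B ^ N := pow_le_pow_left₀ (abs_nonneg _) habs _
    _ = R := hBN

end Counting

theorem pow_le_descFactorial_add (n k : ℕ) :
    n ^ k ≤ n.descFactorial k + k.choose 2 * n ^ (k - 1) := by
  induction k with
  | zero => simp
  | succ k ih =>
    have hd : n.descFactorial k ≤ n ^ k := Nat.descFactorial_le_pow n k
    have h1 : n * n.descFactorial k ≤ (n - k) * n.descFactorial k + k * n ^ k := by
      calc n * n.descFactorial k ≤ ((n - k) + k) * n.descFactorial k :=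
            Nat.mul_le_mul_right _ (by omega)
        _ = (n - k) * n.descFactorial k + k * n.descFactorial k := add_mul _ _ _
        _ ≤ _ := by gcongr
    have h2 : n * (k.choose 2 * n ^ (k - 1)) = k.choose 2 * n ^ k := by
      rcases k with _ | k
      · simp
      · rw [Nat.add_sub_cancel, pow_succ]
        ring
    have h3 : (k + 1).choose 2 = k + k.choose 2 := by
      rw [Nat.choose_succ_succ' k 1, Nat.choose_one_right]
    rw [Nat.descFactorial_succ, Nat.add_sub_cancel, h3, pow_succ']
    calc n * n ^ k ≤ n * (n.descFactorial k + k.choose 2 * n ^ (k - 1)) := by gcongr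
      _ = n * n.descFactorial k + k.choose 2 * n ^ k := by rw [mul_add, h2]
      _ ≤ _ := by linarith [h1]

/-- At most `C(|α|, 2) n^(|α| - 1)` maps `α → Fin n` are not injective. -/
theorem card_not_injective_le {α : Type*} [Fintype α] (n : ℕ) :
    Nat.card {f : α → Fin n // ¬ Function.Injective f}
      ≤ (Fintype.card α).choose 2 * n ^ (Fintype.card α - 1) := by
  have hinj : Fintype.card {f : α → Fin n // Function.Injective f}
      = n.descFactorial (Fintype.card α) := by
    rw [Fintype.card_congr (Equiv.subtypeInjectiveEquivEmbedding α (Fin n)),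
      Fintype.card_embedding_eq, Fintype.card_fin]
  have h := pow_le_descFactorial_add n (Fintype.card α)
  rw [Nat.card_eq_fintype_card, Fintype.card_subtype_compl, hinj, Fintype.card_fun,
    Fintype.card_fin]
  omega

theorem card_hom_le_card_injective_add {α : Type*} [Fintype α] (K : SimpleGraph α) {n : ℕ}
    (G : SimpleGraph (Fin n)) :
    Nat.card (K →g G) ≤ Nat.card {f : K →g G // Function.Injective f}
      + (Fintype.card α).choose 2 * n ^ (Fintype.card α - 1) := by
  have : Finite (K →g G) := DFunLike.finite _
  rw [← Nat.card_congr (Equiv.sumCompl fun f : K →g G => Function.Injective f), Nat.card_sum]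
  refine Nat.add_le_add_left (le_trans ?_ (card_not_injective_le n)) _
  exact Nat.card_le_card_of_injective
    (fun f : {f : K →g G // ¬ Function.Injective f} =>
      (⟨f.1, f.2⟩ : {f : α → Fin n // ¬ Function.Injective f}))
    fun f g h => Subtype.ext (DFunLike.coe_injective (congrArg Subtype.val h))

/-- Counting copies of K_{t,t} via the spectral radius: for an n-vertex graph G
with m > 0 edges and spectral radius λ,
#K_{t,t}(G) ≥ B_t (λ²/m)^{t(t-1)} m^t − (C(2t,2)/(2(t!)²)) n^{2t−1},
where B_t = 2^{−(t−1)²}/(t!)² and #K_{t,t}(G) = inj(K_{t,t},G)/(2(t!)²). -/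
theorem stmt5 (t : ℕ) (ht : 2 ≤ t) (n : ℕ) (G : SimpleGraph (Fin n))
    (m : ℕ) (hm : m = Nat.card G.edgeSet) (hm0 : 0 < m) :
    (Nat.card {f : completeBipartiteGraph (Fin t) (Fin t) →g G // Function.Injective ⇑f} : ℝ)
          / (2 * (t.factorial : ℝ) ^ 2)
      ≥ (((2 : ℝ) ^ ((t - 1) ^ 2))⁻¹ / (t.factorial : ℝ) ^ 2)
            * (specRad (adjMat G) ^ 2 / (m : ℝ)) ^ (t * (t - 1)) * (m : ℝ) ^ t
          - (((2 * t).choose 2 : ℝ) / (2 * (t.factorial : ℝ) ^ 2)) * (n : ℝ) ^ (2 * t - 1) := by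
  have hcard : Fintype.card (Fin t ⊕ Fin t) = 2 * t := by
    rw [Fintype.card_sum, Fintype.card_fin, two_mul]
  have hI := card_hom_le_card_injective_add (completeBipartiteGraph (Fin t) (Fin t)) G
  rw [hcard] at hI
  have hI' : (Nat.card (completeBipartiteGraph (Fin t) (Fin t) →g G) : ℝ)
      ≤ Nat.card {f : completeBipartiteGraph (Fin t) (Fin t) →g G // Function.Injective ⇑f}
        + ((2 * t).choose 2 : ℝ) * (n : ℝ) ^ (2 * t - 1) := by exact_mod_cast hI
  have hL := specRad_pow_le G ht
  rw [← hm] at hL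
  set L := specRad (adjMat G)
  set H : ℝ := (Nat.card (completeBipartiteGraph (Fin t) (Fin t) →g G) : ℝ)
  have hmpos : (0 : ℝ) < m := by exact_mod_cast hm0
  have hkey : ((2 : ℝ) ^ ((t - 1) ^ 2))⁻¹ * (L ^ 2 / (m : ℝ)) ^ (t * (t - 1)) * (m : ℝ) ^ t
      ≤ H / 2 := by
    obtain ⟨r, rfl⟩ := Nat.exists_eq_add_of_le' ht
    have e1 : r + 2 - 1 = r + 1 := rfl
    have e2 : r + 2 - 2 = r := rfl
    rw [e1, e2] at hL
    rw [e1]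
    have hpow : (m : ℝ) ^ ((r + 2) * (r + 1)) = m ^ (r + 2) * m ^ ((r + 2) * r) := by ring
    have htwo : (2 : ℝ) ^ ((r + 1) ^ 2) = 2 * 2 ^ ((r + 2) * r) := by ring
    have hL2 : (L ^ 2) ^ ((r + 2) * (r + 1)) = L ^ (2 * (r + 2) * (r + 1)) := by
      rw [← pow_mul, mul_assoc]
    rw [div_pow, hL2, hpow, htwo]
    rw [mul_pow] at hL
    have : (2 * (2 : ℝ) ^ ((r + 2) * r))⁻¹
          * (L ^ (2 * (r + 2) * (r + 1)) / ((m : ℝ) ^ (r + 2) * m ^ ((r + 2) * r))) * m ^ (r + 2)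
        = L ^ (2 * (r + 2) * (r + 1)) / (2 ^ ((r + 2) * r) * m ^ ((r + 2) * r)) / 2 := by
      field_simp
    rw [this]
    gcongr
    rw [div_le_iff₀ (by positivity)]
    linarith
  have hsplit : ((2 : ℝ) ^ ((t - 1) ^ 2))⁻¹ / (t.factorial : ℝ) ^ 2
        * (L ^ 2 / (m : ℝ)) ^ (t * (t - 1)) * (m : ℝ) ^ t
      = (((2 : ℝ) ^ ((t - 1) ^ 2))⁻¹ * (L ^ 2 / (m : ℝ)) ^ (t * (t - 1)) * (m : ℝ) ^ t)
        / (t.factorial : ℝ) ^ 2 := by ring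
  rw [ge_iff_le, sub_le_iff_le_add, hsplit, div_mul_eq_mul_div, ← add_div, ← div_div]
  gcongr
  linarith
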